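/- arXiv:1903.08218 — 2 statements merged into one kernel-verified Lean document; each statement's English description precedes it below -/
import Mathlib

section
/- (Logical completeness of projection abstraction.) For every STRIPS planning model M over fluents F and labels A and every P ⊆ F, every plan that is valid for M is valid for the projection f_P(M); that is, Π_M ⊆ Π_{f_P(M)}. -/
/-- A STRIPS planning model over fluents `F` and action labels `A`. -/
structure Strips (F : Type*) (A : Type*) where
  prec : A → Set F
  add : A → Set F
  del : A → Set F
  I : Set F
  G : Set F

/-- Result of applying action `a` in state `S`. -/
def Strips.res {F A : Type*} (M : Strips F A) (a : A) (S : Set F) : Set F :=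
  (S \ M.del a) ∪ M.add a

/-- The state trajectory `S₀, S₁, …, Sₙ` of a plan from a state. -/
def Strips.traj {F A : Type*} (M : Strips F A) : List A → Set F → List (Set F)
  | [], S => [S]
  | a :: π, S => S :: M.traj π (M.res a S)

/-- A plan is executable from `S` if each action's precondition holds when applied. -/
def Strips.exec {F A : Type*} (M : Strips F A) : List A → Set F → Prop
  | [], _ => True
  | a :: π, S => M.prec a ⊆ S ∧ M.exec π (M.res a S)

/-- The final state `Sₙ` of the trajectory of a plan from a state. -/
def Strips.finalState {F A : Type*} (M : Strips F A) (π : List A) (S : Set F) : Set F :=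
  π.foldl (fun T a => M.res a T) S

/-- The state `S_k` of the trajectory of a plan from a state. -/
def Strips.stateAt {F A : Type*} (M : Strips F A) (π : List A) (S : Set F) (k : ℕ) : Set F :=
  M.finalState (π.take k) S

/-- A plan is valid if it is executable from the initial state and achieves the goal. -/
def Strips.Valid {F A : Type*} (M : Strips F A) (π : List A) : Prop :=
  M.exec π M.I ∧ M.G ⊆ M.finalState π M.I

/-- The set `Π_M` of valid plans of `M`. -/
def Strips.Plans {F A : Type*} (M : Strips F A) : Set (List A) :=
  {π | M.Valid π}

/-- The projection `f_P(M)` of a model, projecting out the fluents in `P`. -/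
def Strips.proj {F A : Type*} (M : Strips F A) (P : Set F) : Strips F A where
  prec a := M.prec a \ P
  add a := M.add a \ P
  del a := M.del a \ P
  I := M.I \ P
  G := M.G \ P

namespace Strips

variable {F A : Type*} (M : Strips F A) (P : Set F)

theorem res_proj (a : A) (S : Set F) : (M.proj P).res a (S \ P) = M.res a S \ P :=
  calc (S \ P) \ (M.del a \ P) ∪ M.add a \ P
    _ = (S \ M.del a) \ P ∪ M.add a \ P := by
      rw [Set.sdiff_sdiff, Set.union_sdiff_self, ← Set.sdiff_sdiff, Set.sdiff_sdiff_comm]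
    _ = (S \ M.del a ∪ M.add a) \ P := Set.union_sdiff_distrib.symm

theorem finalState_proj (π : List A) (S : Set F) :
    (M.proj P).finalState π (S \ P) = M.finalState π S \ P :=
  List.foldl_hom (· \ P) fun T a => M.res_proj P a T

variable {M} in
theorem exec.proj {π : List A} {S : Set F} (h : M.exec π S) : (M.proj P).exec π (S \ P) := by
  induction π generalizing S with
  | nil => trivial
  | cons a π ih =>
    obtain ⟨h_prec, h_tail⟩ := h
    refine ⟨Set.sdiff_subset_sdiff_left h_prec, ?_⟩
    rw [res_proj]
    exact ih h_tail

end Strips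

theorem stmt2 {F A : Type*} (M : Strips F A) (P : Set F) :
    M.Plans ⊆ (M.proj P).Plans := by
  rintro π ⟨h_exec, h_goal⟩
  have h_goal_proj : M.G \ P ⊆ (M.proj P).finalState π (M.I \ P) := by
    rw [Strips.finalState_proj]
    exact Set.sdiff_subset_sdiff_left h_goal
  exact ⟨h_exec.proj P, h_goal_proj⟩
end

section
/- (Preservation of necessary landmark orderings under concretization.) Let M be a STRIPS planning model over fluents F, P ⊆ F, and φ, φ' : Set F → Prop. Say φ ≺_nec φ' holds in a model N if for every valid plan π ∈ Π_N with state trajectory S₀, …, Sₙ from the initial state and every index j with 0 < j ≤ n such that φ' holds at S_j and φ' does not hold at S_{j-1} (φ' is made true at step j), φ holds at S_{j-1}. If φ ≺_nec φ' holds in the projection f_P(M), then the lifted predicates S ↦ φ(S \ P) and S ↦ φ'(S \ P) satisfy the necessary ordering in M. -/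
/-- Necessary landmark ordering `φ ≺_nec φ'` in model `N`. -/
def NecOrd {F A : Type*} (N : Strips F A) (φ φ' : Set F → Prop) : Prop :=
  ∀ π ∈ N.Plans, ∀ j, 0 < j → j ≤ π.length →
    φ' (N.stateAt π N.I j) → ¬ φ' (N.stateAt π N.I (j - 1)) →
      φ (N.stateAt π N.I (j - 1))

/-!
The map `S ↦ S \ P` intertwines the transitions of `M` and `M.proj P`, so it carries trajectories to
trajectories; since inclusions `prec a ⊆ S` and `G ⊆ S` survive removing `P` from both sides, every
valid plan of `M` is valid for `M.proj P`. Necessary orderings pull back along any such map.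
-/

namespace Strips

variable {F A : Type*} {M : Strips F A} {π : List A} {S : Set F}

theorem res_proj_sdiff (M : Strips F A) (P : Set F) (a : A) (S : Set F) :
    (M.proj P).res a (S \ P) = M.res a S \ P := by
  ext x
  simp only [res, proj, Set.mem_union, Set.mem_sdiff]
  tauto

theorem finalState_proj_sdiff (M : Strips F A) (P : Set F) (π : List A) (S : Set F) :
    (M.proj P).finalState π (S \ P) = M.finalState π S \ P :=
  List.foldl_hom (· \ P) fun T a => M.res_proj_sdiff P a T

theorem stateAt_proj_sdiff (M : Strips F A) (P : Set F) (π : List A) (S : Set F) (k : ℕ) :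
    (M.proj P).stateAt π (S \ P) k = M.stateAt π S k \ P :=
  M.finalState_proj_sdiff P (π.take k) S

theorem exec.proj_sdiff (h : M.exec π S) (P : Set F) : (M.proj P).exec π (S \ P) := by
  induction π generalizing S with
  | nil => trivial
  | cons a π ih =>
    obtain ⟨hprec, hexec⟩ := h
    refine ⟨Set.sdiff_subset_sdiff_left hprec, ?_⟩
    rw [res_proj_sdiff]
    exact ih hexec

theorem Valid.proj (h : M.Valid π) (P : Set F) : (M.proj P).Valid π := by
  obtain ⟨hexec, hgoal⟩ := h
  refine ⟨hexec.proj_sdiff P, ?_⟩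
  calc M.G \ P ⊆ M.finalState π M.I \ P := Set.sdiff_subset_sdiff_left hgoal
    _ = (M.proj P).finalState π (M.I \ P) := (M.finalState_proj_sdiff P π M.I).symm

theorem plans_subset_plans_proj (M : Strips F A) (P : Set F) : M.Plans ⊆ (M.proj P).Plans :=
  fun _ hπ => Valid.proj hπ P

end Strips

theorem NecOrd.comap {F F' A : Type*} {M : Strips F A} {N : Strips F' A} {φ φ' : Set F' → Prop}
    (h : NecOrd N φ φ') (f : Set F → Set F') (hplans : M.Plans ⊆ N.Plans)
    (hstate : ∀ π ∈ M.Plans, ∀ k, N.stateAt π N.I k = f (M.stateAt π M.I k)) :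
    NecOrd M (fun S => φ (f S)) (fun S => φ' (f S)) := by
  intro π hπ j hj hjn
  simpa only [hstate π hπ] using h π (hplans hπ) j hj hjn

theorem stmt9 {F A : Type*} (M : Strips F A) (P : Set F) (φ φ' : Set F → Prop)
    (h : NecOrd (M.proj P) φ φ') :
    NecOrd M (fun S => φ (S \ P)) (fun S => φ' (S \ P)) :=
  h.comap (· \ P) (M.plans_subset_plans_proj P) fun π _ k => M.stateAt_proj_sdiff P π M.I k
end
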